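/- arXiv:1905.12840 — 6 statements merged into one kernel-verified Lean document; each statement's English description precedes it below -/
import Mathlib

section
/- If (X, Y₁, Y₂) satisfies the KKT conditions at ȳ ∈ ℝ and ⟨H,X⟩ > 0, then X̃ = X/⟨H,X⟩ is a feasible solution of the primal problem (COP2Lp), i.e., X̃ ∈ K₁ ∩ K₂ and ⟨H, X̃⟩ = 1; consequently the Newton iterate satisfies ȳ − ‖X‖²/⟨H,X⟩ = ⟨Q, X̃⟩ ≥ φ*, where φ* = inf{⟨Q, Z⟩ : Z ∈ K₁ ∩ K₂, ⟨H, Z⟩ = 1}. -/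
/-!
Pairing `Q - ybar • H = Y₁ + Y₂ - X` with `X` kills `Y₁` and `Y₂` by complementarity, leaving
`⟪Q, X⟫ - ybar * ⟪H, X⟫ = -‖X‖ ^ 2`; dividing by `⟪H, X⟫ > 0` gives the formula for the Newton
iterate. Feasibility is invariance of cones under positive scaling, and the bound by the
infimum is then immediate.
-/

open scoped RealInnerProductSpace Pointwise

/-- The dual cone of a set `J` in a real inner product space. -/
def dualCone {V : Type*} [NormedAddCommGroup V] [InnerProductSpace ℝ V] (J : Set V) : Set V :=
  {Y | ∀ X ∈ J, 0 ≤ ⟪X, Y⟫}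

/-- A nonempty closed convex cone. -/
def IsClosedConvexCone {V : Type*} [NormedAddCommGroup V] [InnerProductSpace ℝ V]
    (K : Set V) : Prop :=
  K.Nonempty ∧ IsClosed K ∧ Convex ℝ K ∧ ∀ (c : ℝ), 0 ≤ c → ∀ x ∈ K, c • x ∈ K

/-- If `(X, Y₁, Y₂)` satisfies the KKT conditions at `ybar` and `⟨H,X⟩ > 0`, then
`X̃ = X/⟨H,X⟩` is feasible for the primal problem (COP2Lp), and the Newton iterate
satisfies `ybar - ‖X‖²/⟨H,X⟩ = ⟨Q, X̃⟩ ≥ φ*`. -/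
theorem stmt_7 {V : Type*} [NormedAddCommGroup V] [InnerProductSpace ℝ V]
    [FiniteDimensional ℝ V]
    (K₁ K₂ : Set V) (hK₁ : IsClosedConvexCone K₁) (hK₂ : IsClosedConvexCone K₂)
    (Q H : V) (G : ℝ → V) (hG : ∀ y, G y = Q - y • H)
    (ybar : ℝ) (X Y₁ Y₂ : V)
    (hKKT : G ybar = Y₁ + Y₂ - X) (hY₁ : Y₁ ∈ dualCone K₁) (hY₂ : Y₂ ∈ dualCone K₂)
    (hX : X ∈ K₁ ∩ K₂) (hXY₁ : ⟪X, Y₁⟫ = 0) (hXY₂ : ⟪X, Y₂⟫ = 0)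
    (hHX : 0 < ⟪H, X⟫)
    (Xt : V) (hXt : Xt = (⟪H, X⟫)⁻¹ • X)
    (φstar : EReal)
    (hφstar : φstar = sInf ((fun Z => ((⟪Q, Z⟫ : ℝ) : EReal)) ''
      {Z : V | Z ∈ K₁ ∩ K₂ ∧ ⟪H, Z⟫ = 1})) :
    (Xt ∈ K₁ ∩ K₂ ∧ ⟪H, Xt⟫ = 1) ∧
      ybar - ‖X‖ ^ 2 / ⟪H, X⟫ = ⟪Q, Xt⟫ ∧
      φstar ≤ ((⟪Q, Xt⟫ : ℝ) : EReal) := by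
  have hne : ⟪H, X⟫ ≠ 0 := hHX.ne'
  have hfeas : Xt ∈ K₁ ∩ K₂ ∧ ⟪H, Xt⟫ = 1 := by
    subst hXt
    have h0 : 0 ≤ (⟪H, X⟫)⁻¹ := inv_nonneg.2 hHX.le
    refine ⟨⟨hK₁.2.2.2 _ h0 _ hX.1, hK₂.2.2.2 _ h0 _ hX.2⟩, ?_⟩
    rw [real_inner_smul_right, inv_mul_cancel₀ hne]
  refine ⟨hfeas, ?_, ?_⟩
  · have h : ⟪X, Q - ybar • H⟫ = ⟪X, Y₁ + Y₂ - X⟫ := by rw [← hG, hKKT]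
    rw [inner_sub_right, inner_sub_right, inner_add_right, real_inner_smul_right, hXY₁, hXY₂,
      real_inner_self_eq_norm_sq, real_inner_comm Q X, real_inner_comm H X] at h
    rw [hXt, real_inner_smul_right]
    field_simp
    linarith
  · rw [hφstar]
    exact sInf_le ⟨Xt, hfeas, rfl⟩
end

section
/- (Lemma 3.1(ii).) Assume H ∈ K₁* + K₂* and that the dual feasible set {y ∈ ℝ : Q − yH ∈ K₁* + K₂*} is nonempty and bounded above with supremum y*. If y > y* and (X, Y₁, Y₂) satisfies the KKT conditions at y, then ⟨H, X⟩ > 0, and X/⟨H,X⟩ is a feasible solution of the primal problem (COP2Lp), i.e., X/⟨H,X⟩ ∈ K₁ ∩ K₂ and ⟨H, X/⟨H,X⟩⟩ = 1. -/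
open scoped RealInnerProductSpace Pointwise

/-!
Pairing the KKT decomposition with `X` and using complementarity gives `⟪X, G y⟫ = -‖X‖²`. Here
`X ≠ 0`: otherwise `G y = Y₁ + Y₂ ∈ C`, so `y ∈ S` and `y ≤ y*`. For a dual feasible point `y₀`,
`G y₀ ∈ C` and `X ∈ K₁ ∩ K₂` give `⟪X, G y₀⟫ ≥ 0`. Since `G y₀ - G y = (y - y₀) H`, it follows
that `(y - y₀) ⟪X, H⟫ ≥ ‖X‖² > 0`, where `y - y₀ > 0`. Hence `⟪H, X⟫ > 0`, and rescaling `X` by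
the inverse stays in the cones.
-/

/-- Lemma 3.1(ii): if `y > y*` and `(X, Y₁, Y₂)` satisfies the KKT conditions at `y`,
then `⟨H, X⟩ > 0` and `X/⟨H,X⟩` is feasible for the primal problem (COP2Lp). -/
theorem stmt_8 {V : Type*} [NormedAddCommGroup V] [InnerProductSpace ℝ V]
    [FiniteDimensional ℝ V]
    (K₁ K₂ : Set V) (hK₁ : IsClosedConvexCone K₁) (hK₂ : IsClosedConvexCone K₂)
    (Q H : V) (G : ℝ → V) (hG : ∀ y, G y = Q - y • H)
    (C : Set V) (hC : C = dualCone K₁ + dualCone K₂) (hCclosed : IsClosed C)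
    (g : ℝ → ℝ) (hg : ∀ y, g y = Metric.infDist (G y) C)
    (hH : H ∈ C)
    (S : Set ℝ) (hS : S = {y : ℝ | G y ∈ C}) (hSne : S.Nonempty) (hSbdd : BddAbove S)
    (ystar : ℝ) (hystar : ystar = sSup S)
    (y : ℝ) (hy : ystar < y) (X Y₁ Y₂ : V)
    (hKKT : G y = Y₁ + Y₂ - X) (hY₁ : Y₁ ∈ dualCone K₁) (hY₂ : Y₂ ∈ dualCone K₂)
    (hX : X ∈ K₁ ∩ K₂) (hXY₁ : ⟪X, Y₁⟫ = 0) (hXY₂ : ⟪X, Y₂⟫ = 0) :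
    0 < ⟪H, X⟫ ∧ (⟪H, X⟫)⁻¹ • X ∈ K₁ ∩ K₂ ∧ ⟪H, (⟪H, X⟫)⁻¹ • X⟫ = 1 := by
  subst hC hS hystar
  have hX0 : X ≠ 0 := by
    rintro rfl
    refine absurd (le_csSup hSbdd ?_) (not_le.mpr hy)
    exact ⟨Y₁, hY₁, Y₂, hY₂, by simp [hKKT]⟩
  have hpos : 0 < ⟪H, X⟫ := by
    obtain ⟨y₀, hy₀⟩ := hSne
    have hlt : y₀ < y := (le_csSup hSbdd hy₀).trans_lt hy
    obtain ⟨Z₁, hZ₁, Z₂, hZ₂, hZ⟩ := hy₀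
    have h₁ := hZ₁ X hX.1
    have h₂ := hZ₂ X hX.2
    have e₀ : ⟪X, Z₁⟫ + ⟪X, Z₂⟫ = ⟪X, Q⟫ - y₀ * ⟪X, H⟫ := by
      have := congrArg (fun v => ⟪X, v⟫) (hZ.trans (hG y₀))
      simpa only [inner_add_right, inner_sub_right, real_inner_smul_right] using this
    have e₁ : ⟪X, Q⟫ - y * ⟪X, H⟫ = ⟪X, Y₁⟫ + ⟪X, Y₂⟫ - ⟪X, X⟫ := by
      have := congrArg (fun v => ⟪X, v⟫) ((hG y).symm.trans hKKT)
      simpa only [inner_add_right, inner_sub_right, real_inner_smul_right] using this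
    have hXX : 0 < ⟪X, X⟫ := real_inner_self_pos.mpr hX0
    have hmul : 0 < (y - y₀) * ⟪X, H⟫ := by linarith
    rw [real_inner_comm]
    exact pos_of_mul_pos_right hmul (sub_pos.mpr hlt).le
  have hinv := (inv_pos.mpr hpos).le
  refine ⟨hpos, ⟨hK₁.2.2.2 _ hinv X hX.1, hK₂.2.2.2 _ hinv X hX.2⟩, ?_⟩
  rw [real_inner_smul_right, inv_mul_cancel₀ hpos.ne']
end

section
/- (Lemma 3.1(iii).) Assume H ∈ K₁* + K₂* and that the dual feasible set {y ∈ ℝ : Q − yH ∈ K₁* + K₂*} is nonempty and bounded above with supremum y*. Then for every y > y*, the function g is differentiable at y with derivative g'(y) = ⟨H, P − G(y)⟩ / g(y) > 0, where P is any point of C = K₁* + K₂* satisfying ‖G(y) − P‖ = g(y); in particular g is strictly increasing and continuously differentiable on the open interval (y*, ∞). -/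
/-!
Write `P y` for the nearest point of `C` to `G y` and `R y = G y - P y`, so `g y = ‖R y‖`.
Since `C` is a convex cone, the variational characterization of the projection says that `R y` is
orthogonal to `P y` and has nonpositive inner product with every point of `C`
(`inner_sub_nearest`). Comparing the nearest points at `y` and `z` then traps the first-order
error of `g ^ 2` between `0` and a quadratic,
`0 ≤ g z ^ 2 - g y ^ 2 + 2 (z - y) ⟪H, R y⟫ ≤ (z - y) ^ 2 ‖H‖ ^ 2`,
so `g ^ 2`, and hence `g` wherever it is positive, is differentiable, with the claimed derivative.

For positivity, pick `y₀ ∈ S`; then `y₀ ≤ y* < y`, and pairing `G y = G y₀ - (y - y₀) • H` with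
`R y` gives `‖R y‖ ^ 2 ≤ (y - y₀) ⟪H, -R y⟫`. Here `R y ≠ 0`, because `y ∉ S`.
Continuity of the derivative follows because `R` is Lipschitz (`norm_sub_nearest_le`).
-/

open scoped RealInnerProductSpace Pointwise

theorem dualCone_add_mem {V : Type*} [NormedAddCommGroup V] [InnerProductSpace ℝ V] {J : Set V}
    {x y : V} (hx : x ∈ dualCone J) (hy : y ∈ dualCone J) : x + y ∈ dualCone J := by
  intro X hX
  rw [inner_add_right]
  exact add_nonneg (hx X hX) (hy X hX)

theorem dualCone_smul_mem {V : Type*} [NormedAddCommGroup V] [InnerProductSpace ℝ V] {J : Set V}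
    {x : V} (hx : x ∈ dualCone J) {c : ℝ} (hc : 0 ≤ c) : c • x ∈ dualCone J := by
  intro X hX
  rw [inner_smul_right]
  exact mul_nonneg hc (hx X hX)

/-- Moreau's description of the residual `X - P` of the projection `P` of `X` onto a convex cone:
it is orthogonal to `P` and lies in the polar cone. -/
theorem inner_sub_nearest {V : Type*} [NormedAddCommGroup V] [InnerProductSpace ℝ V] {C : Set V}
    (hadd : ∀ x ∈ C, ∀ y ∈ C, x + y ∈ C) (hsmul : ∀ c : ℝ, 0 ≤ c → ∀ x ∈ C, c • x ∈ C)
    {X P : V} (hP : P ∈ C) (h : ‖X - P‖ = Metric.infDist X C) :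
    ⟪X - P, P⟫ = 0 ∧ ∀ c ∈ C, ⟪X - P, c⟫ ≤ 0 := by
  have hconv : Convex ℝ C := by
    intro x hx y hy a b ha hb _
    exact hadd _ (hsmul a ha x hx) _ (hsmul b hb y hy)
  have hvar : ∀ w ∈ C, ⟪X - P, w - P⟫ ≤ 0 := by
    refine (norm_eq_iInf_iff_real_inner_le_zero hconv hP).1 ?_
    rw [h, Metric.infDist_eq_iInf]
    simp only [dist_eq_norm]
  -- Moving along the ray through `P` in both directions forces orthogonality.
  have h0 := hvar _ (hsmul 0 le_rfl P hP)
  have h2 := hvar _ (hsmul 2 (by norm_num) P hP)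
  simp only [inner_sub_right, inner_smul_right] at h0 h2
  have horth : ⟪X - P, P⟫ = 0 := by linarith
  refine ⟨horth, fun c hc => ?_⟩
  have := hvar c hc
  rw [inner_sub_right] at this
  linarith

/-- The residual of the projection onto a convex cone is `1`-Lipschitz: here `P` and `P'` are the
nearest points to `X` and `Y`, of which only the relations from `inner_sub_nearest` are needed. -/
theorem norm_sub_nearest_le {V : Type*} [NormedAddCommGroup V] [InnerProductSpace ℝ V]
    {X Y P P' : V} (h1 : ⟪X - P, P⟫ = 0) (h2 : ⟪X - P, P'⟫ ≤ 0)
    (h3 : ⟪Y - P', P'⟫ = 0) (h4 : ⟪Y - P', P⟫ ≤ 0) :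
    ‖(Y - P') - (X - P)‖ ≤ ‖Y - X‖ := by
  have key : 0 ≤ ⟪(Y - P') - (X - P), P' - P⟫ := by
    simp only [inner_sub_right, inner_sub_left] at *
    linarith
  have e : Y - X = ((Y - P') - (X - P)) + (P' - P) := by abel
  have hsq := norm_add_sq_real ((Y - P') - (X - P)) (P' - P)
  rw [← e] at hsq
  refine le_of_sq_le_sq ?_ (norm_nonneg _)
  nlinarith [sq_nonneg ‖P' - P‖]

theorem hasDerivAt_of_quadratic_error {f : ℝ → ℝ} {a y K : ℝ}
    (h : ∀ z, |f z - f y - (z - y) * a| ≤ K * |z - y| ^ 2) : HasDerivAt f a y := by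
  rw [hasDerivAt_iff_isLittleO]
  refine Asymptotics.IsBigO.trans_isLittleO (g := fun z => ‖z - y‖ ^ 2) ?_
    (Asymptotics.isLittleO_pow_sub_sub y (by norm_num))
  refine Asymptotics.IsBigO.of_bound K (Filter.Eventually.of_forall fun z => ?_)
  simpa using h z

/-- Lemma 3.1(iii): for `y > y*` the function `g` is differentiable at `y` with positive
derivative `⟨H, P - G(y)⟩ / g(y)` (where `P` is the nearest point of `C` to `G(y)`);
in particular `g` is strictly increasing and continuously differentiable on `(y*, ∞)`. -/
theorem stmt_9 {V : Type*} [NormedAddCommGroup V] [InnerProductSpace ℝ V]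
    [FiniteDimensional ℝ V]
    (K₁ K₂ : Set V) (hK₁ : IsClosedConvexCone K₁) (hK₂ : IsClosedConvexCone K₂)
    (Q H : V) (G : ℝ → V) (hG : ∀ y, G y = Q - y • H)
    (C : Set V) (hC : C = dualCone K₁ + dualCone K₂) (hCclosed : IsClosed C)
    (g : ℝ → ℝ) (hg : ∀ y, g y = Metric.infDist (G y) C)
    (hH : H ∈ C)
    (S : Set ℝ) (hS : S = {y : ℝ | G y ∈ C}) (hSne : S.Nonempty) (hSbdd : BddAbove S)
    (ystar : ℝ) (hystar : ystar = sSup S) :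
    (∀ y, ystar < y → ∀ P ∈ C, ‖G y - P‖ = g y →
        HasDerivAt g (⟪H, P - G y⟫ / g y) y ∧ 0 < ⟪H, P - G y⟫ / g y) ∧
      StrictMonoOn g (Set.Ioi ystar) ∧
      ∃ g' : ℝ → ℝ, ContinuousOn g' (Set.Ioi ystar) ∧
        ∀ y ∈ Set.Ioi ystar, HasDerivAt g (g' y) y := by
  have hadd : ∀ x ∈ C, ∀ y ∈ C, x + y ∈ C := by
    rw [hC]
    rintro _ ⟨a, ha, b, hb, rfl⟩ _ ⟨c, hc, d, hd, rfl⟩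
    exact ⟨a + c, dualCone_add_mem ha hc, b + d, dualCone_add_mem hb hd, add_add_add_comm _ _ _ _⟩
  have hsmul : ∀ c : ℝ, 0 ≤ c → ∀ x ∈ C, c • x ∈ C := by
    rw [hC]
    rintro c hc _ ⟨a, ha, b, hb, rfl⟩
    exact ⟨c • a, dualCone_smul_mem ha hc, c • b, dualCone_smul_mem hb hc, (smul_add _ _ _).symm⟩
  have hex : ∀ y, ∃ P ∈ C, ‖G y - P‖ = g y := by
    intro y
    obtain ⟨P, hP, h⟩ := hCclosed.exists_infDist_eq_dist ⟨H, hH⟩ (G y)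
    exact ⟨P, hP, by rw [hg, h, dist_eq_norm]⟩
  choose p hpC hpg using hex
  have hproj : ∀ y, ∀ P ∈ C, ‖G y - P‖ = g y →
      ⟪G y - P, P⟫ = 0 ∧ ∀ c ∈ C, ⟪G y - P, c⟫ ≤ 0 := fun y P hP h =>
    inner_sub_nearest hadd hsmul hP (h.trans (hg y))
  have hGdiff : ∀ y z, G z - G y = -((z - y) • H) := by
    intro y z
    rw [hG, hG, sub_smul]
    abel
  have hgpos : ∀ y, ystar < y → 0 < g y := by
    intro y hy
    refine lt_of_le_of_ne (by rw [hg]; exact Metric.infDist_nonneg) fun h0 => ?_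
    have hmem : y ∈ S := by
      rw [hS, Set.mem_ofPred_eq]
      have hz := hpg y
      rw [← h0, norm_eq_zero, sub_eq_zero] at hz
      exact hz ▸ hpC y
    exact absurd (le_csSup hSbdd hmem) (by rw [← hystar]; exact not_le.2 hy)
  have hmain : ∀ y, ystar < y → ∀ P ∈ C, ‖G y - P‖ = g y →
      HasDerivAt g (⟪H, P - G y⟫ / g y) y ∧ 0 < ⟪H, P - G y⟫ / g y := by
    intro y hy P hP hPg
    have hg0 := hgpos y hy
    obtain ⟨horth, hpol⟩ := hproj y P hP hPg
    have hneg : ⟪H, P - G y⟫ = -⟪G y - P, H⟫ := by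
      rw [← neg_sub, inner_neg_right, real_inner_comm]
    constructor
    · have hsq : HasDerivAt (fun z => g z ^ 2) (2 * ⟪H, P - G y⟫) y := by
        refine hasDerivAt_of_quadratic_error (K := ‖H‖ ^ 2) fun z => ?_
        -- `P` is a competitor for the nearest point to `G z`.
        have hup : g z ^ 2 ≤ g y ^ 2 - 2 * ((z - y) * ⟪G y - P, H⟫) + (z - y) ^ 2 * ‖H‖ ^ 2 := by
          have hle : g z ≤ ‖G z - P‖ := by
            rw [hg, ← dist_eq_norm]
            exact Metric.infDist_le_dist_of_mem hP
          have hn := norm_sub_sq_real (G y - P) ((z - y) • H)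
          have e : G y - P - (z - y) • H = G z - P := by
            rw [sub_eq_add_neg _ ((z - y) • H), ← hGdiff]
            abel
          rw [e, hPg, inner_smul_right, norm_smul, mul_pow, Real.norm_eq_abs, sq_abs] at hn
          rw [← hn]
          exact pow_le_pow_left₀ (by rw [← hpg]; exact norm_nonneg _) hle 2
        -- The nearest point to `G z` has nonpositive inner product with the residual at `y`.
        have hlow : g y ^ 2 - 2 * ((z - y) * ⟪G y - P, H⟫) ≤ g z ^ 2 := by
          have hn := norm_add_sq_real (G y - P) ((G z - p z) - (G y - P))
          rw [add_sub_cancel, hPg, hpg] at hn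
          have e : (G z - p z) - (G y - P) = -((z - y) • H) - (p z - P) := by
            rw [← hGdiff]
            abel
          have hi : ⟪G y - P, (G z - p z) - (G y - P)⟫
              = -((z - y) * ⟪G y - P, H⟫) - ⟪G y - P, p z⟫ := by
            rw [e, inner_sub_right, inner_neg_right, inner_smul_right, inner_sub_right, horth,
              sub_zero]
          have := hpol _ (hpC z)
          rw [hi] at hn
          nlinarith [sq_nonneg ‖(G z - p z) - (G y - P)‖]
        rw [hneg, sq_abs, abs_le]
        have : 0 ≤ ‖H‖ ^ 2 * (z - y) ^ 2 := by positivity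
        constructor <;> linarith
      have hs := hsq.sqrt (by positivity)
      have hfun : (fun z => √(g z ^ 2)) = g := by
        funext z
        exact Real.sqrt_sq (by rw [← hpg]; exact norm_nonneg _)
      rw [hfun, Real.sqrt_sq hg0.le] at hs
      convert hs using 1
      field_simp
    · refine div_pos ?_ hg0
      obtain ⟨y₀, hy₀⟩ := hSne
      have hlt : 0 < y - y₀ := by
        have := le_csSup hSbdd hy₀
        rw [← hystar] at this
        linarith
      rw [hS] at hy₀
      have h1 := hpol _ hy₀
      have e : G y₀ = (G y - P) + P + (y - y₀) • H := by
        rw [← neg_neg ((y - y₀) • H), ← hGdiff]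
        abel
      rw [e, inner_add_right, inner_add_right, horth, inner_smul_right,
        real_inner_self_eq_norm_sq, hPg] at h1
      rw [hneg]
      have : 0 < g y ^ 2 := by positivity
      by_contra hcon
      nlinarith [mul_nonneg hlt.le (show 0 ≤ ⟪G y - P, H⟫ by linarith)]
  have hder : ∀ y ∈ Set.Ioi ystar, HasDerivAt g (⟪H, p y - G y⟫ / g y) y := fun y hy =>
    (hmain y hy _ (hpC y) (hpg y)).1
  have hcont : ContinuousOn g (Set.Ioi ystar) := fun y hy =>
    (hder y hy).continuousAt.continuousWithinAt
  refine ⟨hmain, ?_, fun y => ⟪H, p y - G y⟫ / g y, ?_, hder⟩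
  · refine strictMonoOn_of_deriv_pos (convex_Ioi _) hcont fun y hy => ?_
    rw [interior_Ioi] at hy
    rw [(hder y hy).deriv]
    exact (hmain y hy _ (hpC y) (hpg y)).2
  · have hR : Continuous fun y => G y - p y := by
      refine (LipschitzWith.of_dist_le_mul (K := ‖H‖₊) fun z y => ?_).continuous
      obtain ⟨h1, h2⟩ := hproj y _ (hpC y) (hpg y)
      obtain ⟨h3, h4⟩ := hproj z _ (hpC z) (hpg z)
      have h := norm_sub_nearest_le h1 (h2 _ (hpC z)) h3 (h4 _ (hpC y))
      rw [hGdiff, norm_neg, norm_smul, mul_comm] at h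
      simpa [dist_eq_norm] using h
    have hR' : Continuous fun y => ⟪H, p y - G y⟫ := by
      have := continuous_const (y := H) |>.inner (𝕜 := ℝ) hR.neg
      simpa only [Pi.neg_apply, neg_sub] using this
    exact hR'.continuousOn.div hcont fun y hy => (hgpos y hy).ne'
end

section
/- (Lemma 3.1(iv).) Assume H ∈ K₁* + K₂*, that the dual feasible set {y ∈ ℝ : Q − yH ∈ K₁* + K₂*} is nonempty and bounded above with supremum y*, and that there exists z̄ ∈ ℝ such that G(z̄) = Q − z̄H lies in the interior of K₁* + K₂*. Then the difference quotient (g(y) − g(y*))/(y − y*) = g(y)/(y − y*) converges to a positive limit as y decreases to y*; i.e., the right derivative g'₊(y*) of g at y* exists and is positive. -/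
/-!
Write `C` for the closed convex cone `K₁* + K₂*`. The function `g` is the distance to `C` along an
affine line, hence convex (`convexOn_infDist_line`), so its right derivative at `y*` exists; and
`g(y*) = 0` because the feasible set is closed and so contains its supremum.

Positivity comes from the interior point. Let the ball of radius `r` around `G(z̄)` lie in `C`, and
let `p` be the point of `C` nearest to `G(y)`, at distance `d = g(y)`. The segment from the ball to
`p` crosses the line at the parameter `(d z̄ + r y) / (d + r)`, which is therefore feasible and at
most `y*`. This rearranges to `r (y - y*) ≤ g(y) (y* - z̄)` (`linear_growth_infDist`), so for
`y > y*` the quotient `g(y) / (y - y*)` is at least `r / (y* - z̄) > 0`.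
-/

open scoped RealInnerProductSpace Pointwise

theorem convex_dualCone {V : Type*} [NormedAddCommGroup V] [InnerProductSpace ℝ V] (J : Set V) :
    Convex ℝ (dualCone J) := by
  intro x hx y hy a b ha hb _ X hX
  rw [inner_add_right, real_inner_smul_right, real_inner_smul_right]
  exact add_nonneg (mul_nonneg ha (hx X hX)) (mul_nonneg hb (hy X hX))

/-- Along an affine line, the distance to a closed convex set is a convex function: convex
combinations of nearest points lie in the set and compete in the infimum. -/
theorem convexOn_infDist_line {V : Type*} [NormedAddCommGroup V] [InnerProductSpace ℝ V]
    [FiniteDimensional ℝ V] {C : Set V} (hconv : Convex ℝ C) (hcl : IsClosed C)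
    (hne : C.Nonempty) (Q H : V) :
    ConvexOn ℝ Set.univ (fun y : ℝ => Metric.infDist (Q - y • H) C) := by
  refine ⟨convex_univ, fun x _ y _ a b ha hb hab => ?_⟩
  obtain ⟨p, hp, hpx⟩ := hcl.exists_infDist_eq_dist hne (Q - x • H)
  obtain ⟨q, hq, hqy⟩ := hcl.exists_infDist_eq_dist hne (Q - y • H)
  simp only [smul_eq_mul]
  rw [hpx, hqy]
  refine (Metric.infDist_le_dist_of_mem (hconv hp hq ha hb hab)).trans ?_
  rw [dist_eq_norm, dist_eq_norm, dist_eq_norm]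
  have hb' : b = 1 - a := by linarith
  have e : Q - (a * x + b * y) • H - (a • p + b • q)
      = a • (Q - x • H - p) + b • (Q - y • H - q) := by
    subst hb'
    module
  rw [e]
  refine (norm_add_le _ _).trans_eq ?_
  rw [norm_smul, norm_smul, Real.norm_of_nonneg ha, Real.norm_of_nonneg hb]

/-- Quantitative form of the interior point condition: if a ball of radius `r` around the point
with parameter `z` lies in `C`, the distance to `C` grows at least linearly past the last
parameter `s` of the line inside `C`. -/
theorem linear_growth_infDist {V : Type*} [NormedAddCommGroup V] [InnerProductSpace ℝ V]
    [FiniteDimensional ℝ V] {C : Set V} (hconv : Convex ℝ C) (hcl : IsClosed C)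
    (Q H : V) {z r s : ℝ} (hr : 0 < r) (hball : Metric.closedBall (Q - z • H) r ⊆ C)
    (hs : ∀ y : ℝ, Q - y • H ∈ C → y ≤ s) (y : ℝ) :
    r * (y - s) ≤ Metric.infDist (Q - y • H) C * (s - z) := by
  have hne : C.Nonempty := ⟨_, hball (Metric.mem_closedBall_self hr.le)⟩
  obtain ⟨p, hp, hpy⟩ := hcl.exists_infDist_eq_dist hne (Q - y • H)
  set d := Metric.infDist (Q - y • H) C with hd
  have hd0 : 0 ≤ d := Metric.infDist_nonneg
  have hdr : 0 < d + r := by linarith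
  by_cases hdz : d = 0
  · have hy : y ≤ s := by
      apply hs
      rw [hdz] at hpy
      rwa [dist_eq_zero.1 hpy.symm]
    rw [hdz]
    nlinarith
  -- Displacing the centre by `(r / d) • (Q - y • H - p)` stays in the ball; weights
  -- `d / (d + r)` and `r / (d + r)` then cancel the displacement against the error at `p`.
  have hc : (Q - z • H) + (r / d) • (Q - y • H - p) ∈ C := by
    apply hball
    rw [mem_closedBall_iff_norm, add_sub_cancel_left, norm_smul, ← dist_eq_norm, ← hpy,
      Real.norm_of_nonneg (div_nonneg hr.le hd0), div_mul_cancel₀ _ hdz]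
  have hmem := hconv hc hp (div_nonneg hd0 hdr.le) (div_nonneg hr.le hdr.le)
    (by field_simp)
  have e : (d / (d + r)) • ((Q - z • H) + (r / d) • (Q - y • H - p)) + (r / (d + r)) • p
      = Q - ((d * z + r * y) / (d + r)) • H := by
    match_scalars <;> field_simp <;> ring
  rw [e] at hmem
  have := hs _ hmem
  rw [div_le_iff₀ hdr] at this
  linarith

/-- Lemma 3.1(iv): if `G(z̄)` lies in the interior of `K₁* + K₂*` for some `z̄`, then
`g(y)/(y - y*)` converges to a positive limit as `y ↓ y*`; i.e. the right derivative
of `g` at `y*` exists and is positive. -/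
theorem stmt_10 {V : Type*} [NormedAddCommGroup V] [InnerProductSpace ℝ V]
    [FiniteDimensional ℝ V]
    (K₁ K₂ : Set V) (hK₁ : IsClosedConvexCone K₁) (hK₂ : IsClosedConvexCone K₂)
    (Q H : V) (G : ℝ → V) (hG : ∀ y, G y = Q - y • H)
    (C : Set V) (hC : C = dualCone K₁ + dualCone K₂) (hCclosed : IsClosed C)
    (g : ℝ → ℝ) (hg : ∀ y, g y = Metric.infDist (G y) C)
    (hH : H ∈ C)
    (S : Set ℝ) (hS : S = {y : ℝ | G y ∈ C}) (hSne : S.Nonempty) (hSbdd : BddAbove S)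
    (ystar : ℝ) (hystar : ystar = sSup S)
    (hint : ∃ zbar : ℝ, G zbar ∈ interior C) :
    ∃ c : ℝ, 0 < c ∧
      Filter.Tendsto (fun y => g y / (y - ystar))
        (nhdsWithin ystar (Set.Ioi ystar)) (nhds c) := by
  obtain rfl : G = fun y => Q - y • H := funext hG
  obtain rfl : g = fun y => Metric.infDist (Q - y • H) C := funext hg
  have hconv : Convex ℝ C := hC ▸ (convex_dualCone K₁).add (convex_dualCone K₂)
  have hne : C.Nonempty := ⟨H, hH⟩
  have hScl : IsClosed S := hS ▸ hCclosed.preimage (by fun_prop)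
  have hmem : ystar ∈ S := hystar ▸ hScl.csSup_mem hSne hSbdd
  have hle : ∀ y : ℝ, Q - y • H ∈ C → y ≤ ystar := fun y hy =>
    hystar ▸ le_csSup hSbdd (hS ▸ hy)
  obtain ⟨z, hz⟩ := hint
  obtain ⟨r, hr, hball⟩ := Metric.nhds_basis_closedBall.mem_iff.1 (mem_interior_iff_mem_nhds.1 hz)
  have hgrow := linear_growth_infDist hconv hCclosed Q H hr hball hle
  have hzlt : 0 < ystar - z := by
    have h1 := hgrow (ystar + 1)
    have h2 : 0 ≤ Metric.infDist (Q - (ystar + 1) • H) C := Metric.infDist_nonneg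
    by_contra! h
    nlinarith [mul_nonneg h2 (neg_nonneg.2 h)]
  have h0 : Metric.infDist (Q - ystar • H) C = 0 := by
    rw [hS] at hmem
    exact Metric.infDist_zero_of_mem hmem
  have hder := (convexOn_infDist_line hconv hCclosed hne Q H).hasDerivWithinAt_sInf_slope_of_mem_interior
    (x := ystar) (by simp)
  rw [hasDerivWithinAt_iff_tendsto_slope' (by simp)] at hder
  have hlim := hder.congr (f₂ := fun y => Metric.infDist (Q - y • H) C / (y - ystar))
    fun y => by rw [slope_def_field, h0, sub_zero]
  refine ⟨_, (div_pos hr hzlt).trans_le (ge_of_tendsto hlim ?_), hlim⟩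
  filter_upwards [self_mem_nhdsWithin] with y hy
  rw [div_le_div_iff₀ hzlt (sub_pos.2 hy)]
  exact hgrow y
end

section
/- (Theorem 3.1(ii), made precise.) Suppose in addition that the right derivative c = lim_{y↓y*} g(y)/(y − y*) exists and is positive, and that g' is Lipschitz continuous on some interval (y*, y* + δ) with δ > 0. Then the Newton sequence converges quadratically to y*: there exist a constant M > 0 and an index k₀ such that for all k ≥ k₀, 0 ≤ y^{k+1} − y* ≤ M·(y^k − y*)². -/
/-!
Write `e k = y k - ystar`. By convexity, for `z > ystar` the secant slope
`g z / (z - ystar)` lies between its limit `c` at `ystar` and the tangent slope `g' z`, and `g'` is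
monotone on `(ystar, ∞)`. The upper bound keeps the iterates at or above `ystar`. Since
`g' (y k) ≤ g' (y 0)`, the lower bound gives the linear contraction
`e (k + 1) ≤ (1 - c / g' (y 0)) * e k`, so the iterates eventually lie within `δ` of `ystar`.
There the mean value theorem writes `g z = g' ξ * (z - ystar)` with `ystar < ξ < z`, and the
Lipschitz bound yields `g' z * (z - ystar) - g z ≤ L * (z - ystar) ^ 2`. Dividing by `g' z ≥ c`
gives the quadratic estimate with constant `L / c`, enlarged by `1` to make it positive.
-/

/-- Theorem 3.1(ii), made precise: if the right derivative
`c = lim_{y↓y*} g(y)/(y - y*)` exists and is positive, and `g'` is Lipschitz on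
`(y*, y* + δ)`, then the Newton sequence converges quadratically to `y*`. -/
theorem stmt_14 (ystar : ℝ) (g g' : ℝ → ℝ)
    (hgcont : Continuous g) (hgconv : ConvexOn ℝ Set.univ g)
    (hgzero : ∀ y, g y = 0 ↔ y ≤ ystar)
    (hderiv : ∀ y, ystar < y → HasDerivAt g (g' y) y)
    (hg'pos : ∀ y, ystar < y → 0 < g' y)
    (hg'cont : ContinuousOn g' (Set.Ioi ystar))
    (y : ℕ → ℝ) (hy0 : ystar < y 0)
    (hrec : ∀ k, (ystar < y k → y (k + 1) = y k - g (y k) / g' (y k)) ∧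
      (y k = ystar → y (k + 1) = y k))
    (c : ℝ) (hc : 0 < c)
    (hlim : Filter.Tendsto (fun z => g z / (z - ystar))
      (nhdsWithin ystar (Set.Ioi ystar)) (nhds c))
    (δ : ℝ) (hδ : 0 < δ) (L : NNReal)
    (hLip : LipschitzOnWith L g' (Set.Ioo ystar (ystar + δ))) :
    ∃ M : ℝ, 0 < M ∧ ∃ k₀ : ℕ, ∀ k ≥ k₀,
      0 ≤ y (k + 1) - ystar ∧ y (k + 1) - ystar ≤ M * (y k - ystar) ^ 2 := by
  have hg0 : g ystar = 0 := (hgzero ystar).2 le_rfl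
  have hup : ∀ z, ystar < z → g z ≤ g' z * (z - ystar) := by
    intro z hz
    have h := hgconv.slope_le_of_hasDerivAt (Set.mem_univ ystar) (Set.mem_univ z) hz (hderiv z hz)
    rw [slope_def_field, hg0, sub_zero, div_le_iff₀ (sub_pos.2 hz)] at h
    exact h
  have hlow : ∀ z, ystar < z → c * (z - ystar) ≤ g z := by
    intro z hz
    rw [← le_div_iff₀ (sub_pos.2 hz)]
    refine le_of_tendsto hlim ?_
    filter_upwards [Ioo_mem_nhdsGT hz] with w hw
    have h := hgconv.secant_mono (Set.mem_univ ystar) (Set.mem_univ w) (Set.mem_univ z)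
      hw.1.ne' hz.ne' hw.2.le
    simpa [hg0] using h
  have hmono : ∀ a b, ystar < a → a ≤ b → g' a ≤ g' b := by
    intro a b ha hab
    rcases hab.eq_or_lt with rfl | hab
    · exact le_rfl
    · exact (hgconv.le_slope_of_hasDerivAt (Set.mem_univ a) (Set.mem_univ b) hab
        (hderiv a ha)).trans (hgconv.slope_le_of_hasDerivAt (Set.mem_univ a) (Set.mem_univ b) hab
        (hderiv b (ha.trans hab)))
  have hcg : ∀ z, ystar < z → c ≤ g' z := by
    intro z hz
    exact le_of_mul_le_mul_right ((hlow z hz).trans (hup z hz)) (sub_pos.2 hz)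
  have hstep : ∀ k, ystar ≤ y k → ystar ≤ y (k + 1) := by
    intro k hk
    rcases hk.eq_or_lt with h | h
    · rw [(hrec k).2 h.symm]; exact hk
    · have h1 : g (y k) / g' (y k) ≤ y k - ystar := by
        rw [div_le_iff₀ (hg'pos _ h), mul_comm]
        exact hup _ h
      rw [(hrec k).1 h]
      linarith
  have hge : ∀ k, ystar ≤ y k := fun k => Nat.rec hy0.le hstep k
  have hle : ∀ k, y k ≤ y 0 := by
    intro k
    induction k with
    | zero => exact le_rfl
    | succ k ih =>
      rcases (hge k).eq_or_lt with h | h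
      · rw [(hrec k).2 h.symm]; exact ih
      · have h1 : 0 ≤ g (y k) / g' (y k) :=
          div_nonneg ((mul_nonneg hc.le (sub_pos.2 h).le).trans (hlow _ h)) (hg'pos _ h).le
        rw [(hrec k).1 h]
        linarith
  have hG : 0 < g' (y 0) := hg'pos _ hy0
  have hr0 : 0 ≤ 1 - c / g' (y 0) := by
    rw [sub_nonneg, div_le_one hG]
    exact hcg _ hy0
  have hr1 : 1 - c / g' (y 0) < 1 := by
    have := div_pos hc hG
    linarith
  have hgeo : ∀ k, y k - ystar ≤ (1 - c / g' (y 0)) ^ k * (y 0 - ystar) := by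
    intro k
    induction k with
    | zero => simp
    | succ k ih =>
      have hcontr : y (k + 1) - ystar ≤ (1 - c / g' (y 0)) * (y k - ystar) := by
        rcases (hge k).eq_or_lt with h | h
        · rw [(hrec k).2 h.symm, ← h]; simp
        · have h1 : c * (y k - ystar) / g' (y 0) ≤ g (y k) / g' (y k) :=
            div_le_div₀ ((mul_nonneg hc.le (sub_pos.2 h).le).trans (hlow _ h)) (hlow _ h)
              (hg'pos _ h) (hmono _ _ h (hle k))
          rw [(hrec k).1 h]
          have h2 : c * (y k - ystar) / g' (y 0) = c / g' (y 0) * (y k - ystar) := by ring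
          linarith
      calc y (k + 1) - ystar ≤ (1 - c / g' (y 0)) * (y k - ystar) := hcontr
        _ ≤ (1 - c / g' (y 0)) * ((1 - c / g' (y 0)) ^ k * (y 0 - ystar)) :=
          mul_le_mul_of_nonneg_left ih hr0
        _ = (1 - c / g' (y 0)) ^ (k + 1) * (y 0 - ystar) := by ring
  have hev : ∀ᶠ k in Filter.atTop, (1 - c / g' (y 0)) ^ k * (y 0 - ystar) < δ := by
    have ht := (tendsto_pow_atTop_nhds_zero_of_lt_one hr0 hr1).mul_const (y 0 - ystar)
    rw [zero_mul] at ht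
    exact ht.eventually_lt_const hδ
  obtain ⟨k₀, hk₀⟩ := Filter.eventually_atTop.1 hev
  have hM : 0 ≤ (L : ℝ) / c := div_nonneg L.2 hc.le
  refine ⟨L / c + 1, by linarith, k₀, fun k hk => ⟨sub_nonneg.2 (hge (k + 1)), ?_⟩⟩
  rcases (hge k).eq_or_lt with h | h
  · rw [(hrec k).2 h.symm, ← h]; simp
  have hlt : y k < ystar + δ := by
    have := (hgeo k).trans_lt (hk₀ k hk)
    linarith
  have he : 0 < y k - ystar := sub_pos.2 h
  obtain ⟨ξ, hξ, hξeq⟩ := exists_hasDerivAt_eq_slope g g' h hgcont.continuousOn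
    (fun x hx => hderiv x hx.1)
  rw [hg0, sub_zero, eq_div_iff he.ne'] at hξeq
  have hL : g' (y k) - g' ξ ≤ L * (y k - ystar) := by
    have h1 := hLip.dist_le_mul (y k) ⟨h, hlt⟩ ξ ⟨hξ.1, hξ.2.trans hlt⟩
    rw [Real.dist_eq, Real.dist_eq, abs_of_pos (sub_pos.2 hξ.2)] at h1
    have h2 : (L : ℝ) * (y k - ξ) ≤ L * (y k - ystar) :=
      mul_le_mul_of_nonneg_left (by linarith [hξ.1]) L.2
    linarith [le_abs_self (g' (y k) - g' ξ)]
  have hgp := hg'pos _ h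
  calc y (k + 1) - ystar = (g' (y k) - g' ξ) * (y k - ystar) / g' (y k) := by
        rw [(hrec k).1 h, ← hξeq]
        field_simp
        ring
    _ ≤ L * (y k - ystar) * (y k - ystar) / c := by
        refine div_le_div₀ ?_ (mul_le_mul_of_nonneg_right hL he.le) hc (hcg _ h)
        exact mul_nonneg (mul_nonneg L.2 he.le) he.le
    _ = L / c * (y k - ystar) ^ 2 := by ring
    _ ≤ (L / c + 1) * (y k - ystar) ^ 2 :=
        mul_le_mul_of_nonneg_right (by linarith) (sq_nonneg _)
end

section
/- (Convergence of the Lagrangian relaxation values; Lemma 2.1(ii)–(iii).) Assume H¹ ∈ K₁* + K₂*, that the feasible set {X ∈ K₁ ∩ K₂ : ⟨H⁰,X⟩ = 1, ⟨H¹,X⟩ = 0} of (COP1p) is nonempty, and that there exists a real number η̄ > η^p such that the set {X ∈ K₁ ∩ K₂ : ⟨H⁰,X⟩ = 1, ⟨Q⁰,X⟩ ≤ η̄} is bounded. Then η^p is finite and η^p_λ increases monotonically to η^p as λ → ∞, i.e., sup{η^p_λ : λ ≥ 0} = lim_{λ→∞} η^p_λ = η^p. -/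
/-!
Since `H1` lies in the sum of the dual cones, `⟪H1, X⟫ ≥ 0` on `K₁ ∩ K₂`. Hence the relaxed values
`ηpl lam` are nondecreasing in `lam` and never exceed `ηp`, the penalty vanishing on the
feasible set of the original problem. The limit and the supremum then reduce to finding, for each real
`r < ηp`, a multiplier `L ≥ 0` with `r ≤ ηpl L` (`exists_multiplier`). Only the points with
`⟪Q0, X⟫ ≤ r` matter. They form a compact set, by the boundedness hypothesis and finite
dimension, and `⟪H1, X⟫ > 0` there because a zero would be feasible with value below `ηp`; so
any nonnegative upper bound of the continuous function `(r - ⟪Q0, X⟫) / ⟪H1, X⟫` on that set is a suitable `L`.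
`ηp` is finite because `⟪Q0, X⟫` is bounded below on its compact sublevel set at `ηbar`.
-/

open scoped RealInnerProductSpace Pointwise

/-- The elements of `K₁* + K₂*` are nonnegative on `K₁ ∩ K₂`. -/
lemma inner_nonneg_of_mem_add_dualCone {V : Type*} [NormedAddCommGroup V] [InnerProductSpace ℝ V]
    {K₁ K₂ : Set V} {H X : V} (hH : H ∈ dualCone K₁ + dualCone K₂) (hX : X ∈ K₁ ∩ K₂) :
    0 ≤ ⟪H, X⟫ := by
  obtain ⟨Y₁, h₁, Y₂, h₂, rfl⟩ := Set.mem_add.1 hH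
  rw [inner_add_left, real_inner_comm, real_inner_comm X Y₂]
  exact add_nonneg (h₁ X hX.1) (h₂ X hX.2)

/-- Compactness of the sublevel sets of the relaxation without penalty. -/
lemma isCompact_sublevel {V : Type*} [NormedAddCommGroup V] [InnerProductSpace ℝ V]
    [FiniteDimensional ℝ V] {K : Set V} (hK : IsClosed K) {Q0 H0 : V} {b r : ℝ} (hr : r ≤ b)
    (hbdd : Bornology.IsBounded {X : V | X ∈ K ∧ ⟪H0, X⟫ = 1 ∧ ⟪Q0, X⟫ ≤ b}) :
    IsCompact {X : V | X ∈ K ∧ ⟪H0, X⟫ = 1 ∧ ⟪Q0, X⟫ ≤ r} := by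
  have : ProperSpace V := FiniteDimensional.proper ℝ V
  refine Metric.isCompact_of_isClosed_isBounded ?_
    (hbdd.subset fun X hX => ⟨hX.1, hX.2.1, hX.2.2.trans hr⟩)
  have h0 : IsClosed {X : V | ⟪H0, X⟫ = 1} := isClosed_eq (by fun_prop) (by fun_prop)
  have hQ : IsClosed {X : V | ⟪Q0, X⟫ ≤ r} := isClosed_le (by fun_prop) (by fun_prop)
  exact hK.inter (h0.inter hQ)

/-- If every point of the slice with `⟪H1, X⟫ = 0` has objective value above `r`, then some
nonnegative multiplier makes the penalized objective at least `r` on the whole slice. -/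
lemma exists_multiplier {V : Type*} [NormedAddCommGroup V] [InnerProductSpace ℝ V]
    {K : Set V} {Q0 H0 H1 : V} {r : ℝ} (hpos : ∀ X ∈ K, 0 ≤ ⟪H1, X⟫)
    (hcomp : IsCompact {X : V | X ∈ K ∧ ⟪H0, X⟫ = 1 ∧ ⟪Q0, X⟫ ≤ r})
    (hr : ∀ X ∈ K, ⟪H0, X⟫ = 1 → ⟪H1, X⟫ = 0 → r < ⟪Q0, X⟫) :
    ∃ L : ℝ, 0 ≤ L ∧ ∀ X ∈ K, ⟪H0, X⟫ = 1 → r ≤ ⟪Q0 + L • H1, X⟫ := by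
  have hH1 : ∀ X ∈ {X : V | X ∈ K ∧ ⟪H0, X⟫ = 1 ∧ ⟪Q0, X⟫ ≤ r}, ⟪H1, X⟫ ≠ 0 :=
    fun X hX h0 => absurd (hr X hX.1 hX.2.1 h0) (not_lt.2 hX.2.2)
  have hcont : ContinuousOn (fun X : V => (r - ⟪Q0, X⟫) / ⟪H1, X⟫)
      {X : V | X ∈ K ∧ ⟪H0, X⟫ = 1 ∧ ⟪Q0, X⟫ ≤ r} :=
    ContinuousOn.div (by fun_prop) (by fun_prop) hH1
  obtain ⟨M, hM⟩ := hcomp.bddAbove_image hcont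
  refine ⟨max M 0, le_max_right _ _, fun X hXK hX0 => ?_⟩
  rw [inner_add_left, real_inner_smul_left]
  have h1 := hpos X hXK
  rcases le_or_gt ⟪Q0, X⟫ r with hle | hlt
  · have hX : X ∈ {X : V | X ∈ K ∧ ⟪H0, X⟫ = 1 ∧ ⟪Q0, X⟫ ≤ r} := ⟨hXK, hX0, hle⟩
    have h2 : (r - ⟪Q0, X⟫) / ⟪H1, X⟫ ≤ max M 0 :=
      (hM (Set.mem_image_of_mem _ hX)).trans (le_max_left _ _)
    rw [div_le_iff₀ (lt_of_le_of_ne h1 (hH1 X hX).symm)] at h2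
    linarith
  · have := mul_nonneg (le_max_right M 0) h1
    linarith

/-- Convergence of the Lagrangian relaxation values (Lemma 2.1(ii)-(iii)):
`η^p` is finite and `η^p_λ` increases monotonically to `η^p` as `λ → ∞`. -/
theorem stmt_16 {V : Type*} [NormedAddCommGroup V] [InnerProductSpace ℝ V]
    [FiniteDimensional ℝ V]
    (K₁ K₂ : Set V) (hK₁ : IsClosedConvexCone K₁) (hK₂ : IsClosedConvexCone K₂)
    (Q0 H0 H1 : V) (hH1 : H1 ∈ dualCone K₁ + dualCone K₂)
    (ηp : EReal)
    (hηp : ηp = sInf ((fun X => ((⟪Q0, X⟫ : ℝ) : EReal)) ''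
      {X : V | X ∈ K₁ ∩ K₂ ∧ ⟪H0, X⟫ = 1 ∧ ⟪H1, X⟫ = 0}))
    (ηpl : ℝ → EReal)
    (hηpl : ∀ lam : ℝ, ηpl lam = sInf ((fun X => ((⟪Q0 + lam • H1, X⟫ : ℝ) : EReal)) ''
      {X : V | X ∈ K₁ ∩ K₂ ∧ ⟪H0, X⟫ = 1}))
    (hfeas : {X : V | X ∈ K₁ ∩ K₂ ∧ ⟪H0, X⟫ = 1 ∧ ⟪H1, X⟫ = 0}.Nonempty)
    (ηbar : ℝ) (hηbar : ηp < (ηbar : EReal))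
    (hbdd : Bornology.IsBounded {X : V | X ∈ K₁ ∩ K₂ ∧ ⟪H0, X⟫ = 1 ∧ ⟪Q0, X⟫ ≤ ηbar}) :
    (∃ r : ℝ, ηp = (r : EReal)) ∧
      (∀ a b : ℝ, 0 ≤ a → a ≤ b → ηpl a ≤ ηpl b) ∧
      Filter.Tendsto ηpl Filter.atTop (nhds ηp) ∧
      sSup (ηpl '' {lam : ℝ | 0 ≤ lam}) = ηp := by
  have hpos : ∀ X ∈ K₁ ∩ K₂, 0 ≤ ⟪H1, X⟫ := fun X hX => inner_nonneg_of_mem_add_dualCone hH1 hX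
  have hcl : IsClosed (K₁ ∩ K₂) := hK₁.2.1.inter hK₂.2.1
  have hle : ∀ X ∈ K₁ ∩ K₂, ⟪H0, X⟫ = 1 → ⟪H1, X⟫ = 0 → ηp ≤ ((⟪Q0, X⟫ : ℝ) : EReal) := by
    intro X hX h0 h1
    rw [hηp]
    exact sInf_le ⟨X, ⟨hX, h0, h1⟩, rfl⟩
  have hmono : ∀ a b : ℝ, a ≤ b → ηpl a ≤ ηpl b := by
    intro a b hab
    rw [hηpl b]
    refine le_sInf ?_
    rintro _ ⟨X, hX, rfl⟩
    rw [hηpl a]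
    refine (sInf_le (Set.mem_image_of_mem _ hX)).trans (EReal.coe_le_coe_iff.2 ?_)
    rw [inner_add_left, inner_add_left, real_inner_smul_left, real_inner_smul_left]
    have := mul_le_mul_of_nonneg_right hab (hpos X hX.1)
    linarith
  have hupper : ∀ lam : ℝ, ηpl lam ≤ ηp := by
    intro lam
    rw [hηp]
    refine le_sInf ?_
    rintro _ ⟨X, hX, rfl⟩
    rw [hηpl lam]
    have hX2 : X ∈ {X : V | X ∈ K₁ ∩ K₂ ∧ ⟪H0, X⟫ = 1} := ⟨hX.1, hX.2.1⟩
    refine (sInf_le (Set.mem_image_of_mem _ hX2)).trans (EReal.coe_le_coe_iff.2 ?_)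
    rw [inner_add_left, real_inner_smul_left, hX.2.2, mul_zero, add_zero]
  have hlower : ∀ c : EReal, c < ηp → ∃ L : ℝ, 0 ≤ L ∧ c < ηpl L := by
    intro c hc
    obtain ⟨r, hcr, hr⟩ := EReal.lt_iff_exists_real_btwn.1 hc
    obtain ⟨L, hL, h⟩ := exists_multiplier (H0 := H0) (Q0 := Q0) hpos
      (isCompact_sublevel hcl (EReal.coe_le_coe_iff.1 (hr.trans hηbar).le) hbdd)
      (fun X hX h0 h1 => EReal.coe_lt_coe_iff.1 (hr.trans_le (hle X hX h0 h1)))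
    refine ⟨L, hL, hcr.trans_le ?_⟩
    rw [hηpl L]
    refine le_sInf ?_
    rintro _ ⟨X, hX, rfl⟩
    exact EReal.coe_le_coe_iff.2 (h X hX.1 hX.2)
  refine ⟨?_, fun a b _ hab => hmono a b hab, ?_, ?_⟩
  · obtain ⟨m, hm⟩ := (isCompact_sublevel hcl le_rfl hbdd).bddBelow_image
      (f := fun X : V => (⟪Q0, X⟫ : ℝ)) (by fun_prop)
    -- Points outside the compact sublevel set have value above `ηbar`, so `min m ηbar` bounds all.
    have hbelow : ((min m ηbar : ℝ) : EReal) ≤ ηp := by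
      rw [hηp]
      refine le_sInf ?_
      rintro _ ⟨X, hX, rfl⟩
      refine EReal.coe_le_coe_iff.2 ?_
      rcases le_or_gt ⟪Q0, X⟫ ηbar with h | h
      · exact (min_le_left _ _).trans (hm ⟨X, ⟨hX.1, hX.2.1, h⟩, rfl⟩)
      · exact (min_le_right _ _).trans h.le
    exact ⟨ηp.toReal, (EReal.coe_toReal hηbar.ne_top
      ((EReal.bot_lt_coe _).trans_le hbelow).ne').symm⟩
  · refine tendsto_order.2 ⟨fun c hc => ?_, fun c hc =>
      Filter.Eventually.of_forall fun lam => (hupper lam).trans_lt hc⟩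
    obtain ⟨L, -, h⟩ := hlower c hc
    filter_upwards [Filter.eventually_ge_atTop L] with lam hlam
    exact h.trans_le (hmono L lam hlam)
  · refine le_antisymm (sSup_le ?_) (le_of_forall_lt fun c hc => ?_)
    · rintro _ ⟨lam, -, rfl⟩
      exact hupper lam
    · obtain ⟨L, hL, h⟩ := hlower c hc
      exact h.trans_le (le_sSup ⟨L, hL, rfl⟩)
end
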